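/- Define $A_n \in \mathbb{Z}^{n\times n}$ by $(A_n)_{i,j} = 2^{2^{(n+1)(i-1)+j}}$. Then for $t = n^2/4$, the number $\Sigma_t(A_n)$ of distinct sums of distinct $t$-wise products of entries of $A_n$ is at least $2^{\binom{n^2}{n^2/4}}$; consequently (using the upper bound $\Sigma_t \le 2^{2n^3(e^2 \cdot 4s/n^2)^{n^2/4}}$ for any factorization $A_n = PQ$ of total sparsity $s$), every factorization $A_n = PQ$ has total sparsity at least $n^2/100$. -/

import Mathlib

/-! If `A = P * Q`, then every entry of `A` is the value, at the nonzero entries of `P` and `Q`,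
of a polynomial of degree at most `2` with natural number coefficients. Let `s` be the number of
variables, i.e. the total sparsity, and `N` the number of entries of `A`. Each of the `2 ^ 2 ^ N`
sums of products of distinct entries of `A` is then the value of a polynomial of degree at most
`2 * N` with coefficients at most `(s + 1) ^ N`. When `A` is made of double powers of two with
distinct exponents these sums are distinct, by uniqueness of binary expansions, so there must be
as many polynomials, whereas a sparse factorization leaves room for few monomials of such degree. -/

open Finset Function MvPolynomial

section SumProd

variable {α R : Type*}

/-- The sums of products of entries of `a`, each product running over a set of distinct indices.
For a family `F` of `t`-element sets these are the sums counted by the quantity `Σ_t` of the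
paper; the sparsity bound uses all `F` at once. -/
def sumProd [CommSemiring R] (a : α → R) (F : Finset (Finset α)) : R :=
  ∑ T ∈ F, ∏ p ∈ T, a p

/-- The products of `t` entries of `a` at distinct indices. -/
def productsOfCard [CommMonoid R] (a : α → R) (t : ℕ) : Set R :=
  {y | ∃ T : Finset α, T.card = t ∧ y = ∏ p ∈ T, a p}

/-- The sums of finitely many distinct elements of `Y`. With `Y = productsOfCard a t` its number
of elements is the quantity `Σ_t` of the paper. -/
def subsetSums [AddCommMonoid R] (Y : Set R) : Set R :=
  {x | ∃ S : Finset R, ↑S ⊆ Y ∧ x = ∑ y ∈ S, y}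

theorem map_sumProd {S : Type*} [CommSemiring R] [CommSemiring S] (φ : R →+* S) (a : α → R)
    (F : Finset (Finset α)) : φ (sumProd a F) = sumProd (φ ∘ a) F := by
  simp only [sumProd, map_sum, map_prod, comp_apply]

theorem sumProd_injective_of_map {S : Type*} [CommSemiring R] [CommSemiring S] (φ : R →+* S)
    {a : α → R} (h : Injective (sumProd (φ ∘ a))) : Injective (sumProd a) :=
  .of_comp (f := φ) <| by rwa [show φ ∘ sumProd a = _ from funext (map_sumProd φ a)]

theorem sum_two_pow_injective [Semiring R] [CharZero R] {e : α → ℕ} (he : Injective e) :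
    Injective fun S : Finset α => ∑ p ∈ S, (2 : R) ^ e p := by
  intro S T h
  have h_nat : ∑ p ∈ S, 2 ^ e p = ∑ p ∈ T, 2 ^ e p := by
    dsimp only at h
    exact_mod_cast h
  refine map_injective ⟨e, he⟩ (geomSum_injective le_rfl ?_)
  simpa only [sum_map, Embedding.coeFn_mk] using h_nat

theorem sumProd_two_pow_two_pow_injective [CommSemiring R] [CharZero R] {e : α → ℕ}
    (he : Injective e) : Injective (sumProd fun p => (2 : R) ^ 2 ^ e p) := by
  have h_sum : Injective fun T : Finset α => ∑ p ∈ T, 2 ^ e p := sum_two_pow_injective he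
  unfold sumProd
  simpa only [prod_pow_eq_pow_sum] using! sum_two_pow_injective h_sum

theorem ncard_subsetSums_image {β : Type*} [AddCommMonoid R] {f : β → R}
    (hf : Injective fun F : Finset β => ∑ b ∈ F, f b) (B : Finset β) :
    (subsetSums (f '' B)).ncard = 2 ^ #B := by
  classical
  have hf_inj : Injective f := by
    simpa only [comp_def, sum_singleton] using hf.comp singleton_injective
  have h_image : subsetSums (f '' B) = B.powerset.image fun F => ∑ b ∈ F, f b := by
    have sum_image_id (F : Finset β) : ∑ y ∈ F.image f, y = ∑ b ∈ F, f b :=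
      sum_image hf_inj.injOn
    ext x
    rw [mem_coe, mem_image]
    constructor
    · rintro ⟨S, hS, rfl⟩
      obtain ⟨F, hF, rfl⟩ := subset_set_image_iff.1 hS
      exact ⟨F, mem_powerset.2 (coe_subset.1 hF), (sum_image_id F).symm⟩
    · rintro ⟨F, hF, rfl⟩
      refine ⟨F.image f, ?_, (sum_image_id F).symm⟩
      rw [coe_image]
      exact Set.image_mono (coe_subset.2 (mem_powerset.1 hF))
  rw [h_image, Set.ncard_coe_finset, card_image_of_injective _ hf, card_powerset]

theorem ncard_subsetSums_productsOfCard [Fintype α] [CommSemiring R] {a : α → R}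
    (ha : Injective (sumProd a)) (t : ℕ) :
    (subsetSums (productsOfCard a t)).ncard = 2 ^ (Fintype.card α).choose t := by
  have h_image : productsOfCard a t =
      (fun T => ∏ p ∈ T, a p) '' ↑(powersetCard t univ : Finset (Finset α)) := by
    ext y
    simp [productsOfCard, eq_comm]
  rw [h_image, ncard_subsetSums_image ha, card_powersetCard, card_univ]

end SumProd

section MonomialCount

variable {V : Type*} [Fintype V]

-- The sum is part of the expansion of the product over `V` of the geometric series in `x`.
theorem sum_pow_degree_le {x : ℝ} (hx₀ : 0 < x) (hx₁ : x < 1) (M : Finset (V →₀ ℕ)) :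
    ∑ d ∈ M, x ^ d.degree ≤ (1 - x)⁻¹ ^ Fintype.card V := by
  classical
  set D := M.sup Finsupp.degree
  have h_box : M.map ⟨_, DFunLike.coe_injective⟩ ⊆ Fintype.piFinset fun _ : V => range (D + 1) := by
    intro f hf
    obtain ⟨d, hd, rfl⟩ := mem_map.1 hf
    exact Fintype.mem_piFinset.2 fun v =>
      mem_range_succ_iff.2 ((Finsupp.le_degree v d).trans (le_sup hd))
  calc ∑ d ∈ M, x ^ d.degree
      = ∑ f ∈ M.map ⟨_, DFunLike.coe_injective⟩, ∏ v, x ^ f v := by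
        simp [Finsupp.degree_eq_sum, prod_pow_eq_pow_sum]
    _ ≤ ∑ f ∈ Fintype.piFinset fun _ : V => range (D + 1), ∏ v, x ^ f v :=
        sum_le_sum_of_subset_of_nonneg h_box fun _ _ _ => by positivity
    _ = (∑ i ∈ range (D + 1), x ^ i) ^ Fintype.card V := by
        rw [← prod_univ_sum (fun _ : V => range (D + 1)) fun _ i => x ^ i, prod_const, card_univ]
    _ ≤ (1 - x)⁻¹ ^ Fintype.card V := by
        gcongr
        exact sum_le_hasSum _ (fun _ _ => by positivity) (hasSum_geometric_of_lt_one hx₀.le hx₁)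

theorem card_mul_pow_le_of_degree_le {x : ℝ} (hx₀ : 0 < x) (hx₁ : x < 1) {M : Finset (V →₀ ℕ)}
    {D : ℕ} (hM : ∀ d ∈ M, d.degree ≤ D) : #M * x ^ D ≤ (1 - x)⁻¹ ^ Fintype.card V :=
  calc #M * x ^ D = #M • x ^ D := (nsmul_eq_mul _ _).symm
    _ ≤ ∑ d ∈ M, x ^ d.degree :=
        card_nsmul_le_sum _ _ _ fun d hd => pow_le_pow_of_le_one hx₀.le hx₁.le (hM d hd)
    _ ≤ _ := sum_pow_degree_le hx₀ hx₁ M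

end MonomialCount

section PolynomialCount

variable {α V : Type*}

theorem coeff_le_eval_one (p : MvPolynomial V ℕ) (d : V →₀ ℕ) : p.coeff d ≤ eval 1 p := by
  have h_eval : eval 1 p = ∑ d ∈ p.support, p.coeff d := by
    simp [eval_eq]
  rw [h_eval]
  by_cases hd : d ∈ p.support
  · exact single_le_sum (f := p.coeff) (fun _ _ => Nat.zero_le _) hd
  · simp [notMem_support_iff.1 hd]

theorem card_le_pow_card_of_coeff_le {β : Type*} [Fintype β] {f : β → MvPolynomial V ℕ}
    (hf : Injective f) {M : Finset (V →₀ ℕ)} (hM : ∀ b, (f b).support ⊆ M) {c : ℕ}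
    (hc : ∀ b d, (f b).coeff d ≤ c) : Fintype.card β ≤ (c + 1) ^ #M := by
  classical
  let coeffs (b : β) (d : M) : Fin (c + 1) := ⟨(f b).coeff d, Nat.lt_succ_of_le (hc b d)⟩
  have h_coeffs : Injective coeffs := by
    intro b b' h
    refine hf (MvPolynomial.ext _ _ fun d => ?_)
    by_cases hd : d ∈ M
    · exact congrArg Fin.val (congrFun h ⟨d, hd⟩)
    · rw [notMem_support_iff.1 (mt (@hM b d) hd), notMem_support_iff.1 (mt (@hM b' d) hd)]
  simpa using Fintype.card_le_of_injective coeffs h_coeffs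

variable [Fintype α] {a : α → MvPolynomial V ℕ}

theorem totalDegree_sumProd_le {k : ℕ} (hdeg : ∀ p, (a p).totalDegree ≤ k)
    (F : Finset (Finset α)) : (sumProd a F).totalDegree ≤ k * Fintype.card α := by
  refine totalDegree_finsetSum_le fun T _ => ?_
  calc (∏ p ∈ T, a p).totalDegree ≤ ∑ p ∈ T, (a p).totalDegree := totalDegree_finsetProd _ _
    _ ≤ #T • k := sum_le_card_nsmul _ _ k fun p _ => hdeg p
    _ ≤ k * Fintype.card α := by
        rw [smul_eq_mul, mul_comm]
        gcongr
        exact card_le_univ T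

theorem sumProd_le_add_one_pow {y : α → ℕ} {b : ℕ} (hy : ∀ p, y p ≤ b) (F : Finset (Finset α)) :
    sumProd y F ≤ (b + 1) ^ Fintype.card α :=
  calc sumProd y F ≤ ∑ T ∈ F, ∏ _p ∈ T, b := by
        unfold sumProd
        gcongr with T _ p _
        exact hy p
    _ ≤ ∑ T ∈ (univ : Finset α).powerset, ∏ _p ∈ T, b :=
        sum_le_sum_of_subset fun T _ => mem_powerset.2 (subset_univ T)
    _ = (b + 1) ^ Fintype.card α := by
        rw [← prod_add_one, prod_const, card_univ]

theorem two_pow_two_pow_card_le (ha : Injective (sumProd a)) {k b : ℕ}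
    (hdeg : ∀ p, (a p).totalDegree ≤ k) (heval : ∀ p, eval 1 (a p) ≤ b) {M : Finset (V →₀ ℕ)}
    (hM : ∀ d : V →₀ ℕ, d.degree ≤ k * Fintype.card α → d ∈ M) :
    2 ^ 2 ^ Fintype.card α ≤ ((b + 1) ^ Fintype.card α + 1) ^ #M := by
  have h_support (F) : (sumProd a F).support ⊆ M := fun d hd =>
    hM d ((le_totalDegree hd).trans (totalDegree_sumProd_le hdeg F))
  have h_coeff (F d) : (sumProd a F).coeff d ≤ (b + 1) ^ Fintype.card α :=
    calc (sumProd a F).coeff d ≤ eval 1 (sumProd a F) := coeff_le_eval_one _ _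
      _ = sumProd (fun p => eval 1 (a p)) F := map_sumProd _ _ _
      _ ≤ (b + 1) ^ Fintype.card α := sumProd_le_add_one_pow heval F
  simpa only [Fintype.card_finset] using card_le_pow_card_of_coeff_le ha h_support h_coeff

theorem add_one_pow_add_one_le_two_pow (s N : ℕ) : (s + 1) ^ N + 1 ≤ 2 ^ (s * N + 1) :=
  calc (s + 1) ^ N + 1 ≤ (2 ^ s) ^ N + (2 ^ s) ^ N :=
        add_le_add (Nat.pow_le_pow_left Nat.lt_two_pow_self N) (Nat.one_le_pow _ _ (by positivity))
    _ = 2 ^ (s * N + 1) := by rw [← pow_mul, pow_succ, mul_two]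

theorem le_hundred_mul_of_two_pow_le {N s : ℕ}
    (h : (2 : ℝ) ^ N ≤ (s * N + 1) * ((6 / 5) ^ (2 * N) * 6 ^ s)) : N ≤ 100 * s := by
  by_contra! hlt
  have h_linear : (s * N + 1 : ℝ) ≤ (29 / 25) ^ (2 * N) :=
    calc (s * N + 1 : ℝ) ≤ (1 + N * (4 / 25)) ^ 2 := by
          have : (100 * s : ℝ) ≤ N := by exact_mod_cast hlt.le
          nlinarith [(Nat.cast_nonneg N : (0 : ℝ) ≤ N)]
      _ ≤ ((1 + 4 / 25) ^ N) ^ 2 := by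
          gcongr
          exact one_add_mul_le_pow (by norm_num) N
      _ = (29 / 25) ^ (2 * N) := by rw [← pow_mul, mul_comm N]; norm_num
  have h_six : (6 : ℝ) ^ s ≤ (51 / 50) ^ N :=
    calc (6 : ℝ) ^ s ≤ ((51 / 50) ^ 100) ^ s := by
          gcongr
          norm_num
      _ = (51 / 50) ^ (100 * s) := (pow_mul _ _ _).symm
      _ ≤ (51 / 50) ^ N := pow_le_pow_right₀ (by norm_num) hlt.le
  have h_lt : (2 : ℝ) ^ N < 2 ^ N :=
    calc (2 : ℝ) ^ N ≤ (s * N + 1) * ((6 / 5) ^ (2 * N) * 6 ^ s) := h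
      _ ≤ (29 / 25) ^ (2 * N) * ((6 / 5) ^ (2 * N) * (51 / 50) ^ N) := by gcongr
      _ = ((29 / 25) ^ 2 * ((6 / 5) ^ 2 * (51 / 50))) ^ N := by simp only [pow_mul, mul_pow]
      _ < 2 ^ N := pow_lt_pow_left₀ (by norm_num) (by norm_num) (by omega)
  exact h_lt.false

theorem card_le_hundred_mul_card [Fintype V] (ha : Injective (sumProd a))
    (hdeg : ∀ p, (a p).totalDegree ≤ 2) (heval : ∀ p, eval 1 (a p) ≤ Fintype.card V) :
    Fintype.card α ≤ 100 * Fintype.card V := by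
  set N := Fintype.card α
  set s := Fintype.card V
  let M : Finset (V →₀ ℕ) := (Finsupp.finite_of_degree_le (2 * N)).toFinset
  have hM (d : V →₀ ℕ) : d ∈ M ↔ d.degree ≤ 2 * N := Set.Finite.mem_toFinset _
  have h_count : 2 ^ N ≤ (s * N + 1) * #M := by
    refine (Nat.pow_le_pow_iff_right one_lt_two).1 ?_
    calc 2 ^ 2 ^ N ≤ ((s + 1) ^ N + 1) ^ #M :=
          two_pow_two_pow_card_le ha hdeg heval fun d => (hM d).2
      _ ≤ (2 ^ (s * N + 1)) ^ #M := Nat.pow_le_pow_left (add_one_pow_add_one_le_two_pow s N) _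
      _ = 2 ^ ((s * N + 1) * #M) := (pow_mul _ _ _).symm
  have h_monomials : (#M : ℝ) ≤ (6 / 5) ^ (2 * N) * 6 ^ s := by
    -- A weight `x` per degree costs a factor `x⁻¹ ^ (2 * N)`, so `x⁻¹ ^ 2` must stay below `2`.
    have h_weight : #M * (5 / 6 : ℝ) ^ (2 * N) ≤ (1 - 5 / 6)⁻¹ ^ s :=
      card_mul_pow_le_of_degree_le (by norm_num) (by norm_num) fun d => (hM d).1
    calc (#M : ℝ) ≤ (1 - 5 / 6)⁻¹ ^ s / (5 / 6) ^ (2 * N) :=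
          (le_div_iff₀ (by positivity)).2 h_weight
      _ = (6 / 5) ^ (2 * N) * 6 ^ s := by
          rw [div_eq_inv_mul, ← inv_pow]
          norm_num
  refine le_hundred_mul_of_two_pow_le ?_
  calc (2 : ℝ) ^ N ≤ (s * N + 1) * #M := by exact_mod_cast h_count
    _ ≤ _ := by gcongr

end PolynomialCount

section Factorization

variable {m n ι R V : Type*}

section Symbolic

variable [Zero R]

/-- The positions of the nonzero entries of `P`; their number is the sparsity of `P`. -/
def nonzeroPositions (P : Matrix m n R) : Set (m × n) :=
  {p | P p.1 p.2 ≠ 0}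

open Classical in
/-- The matrix `P` with each nonzero entry replaced by the variable that `f` attaches to its
position, as a matrix of polynomials over `ℕ`. -/
noncomputable def symbolicMatrix (P : Matrix m n R) (f : nonzeroPositions P → V) :
    Matrix m n (MvPolynomial V ℕ) :=
  Matrix.of fun i j => if h : (i, j) ∈ nonzeroPositions P then X (f ⟨(i, j), h⟩) else 0

theorem totalDegree_symbolicMatrix_le (P : Matrix m n R) (f : nonzeroPositions P → V) (i : m)
    (j : n) : (symbolicMatrix P f i j).totalDegree ≤ 1 := by
  rw [symbolicMatrix, Matrix.of_apply]
  split_ifs <;> simp [totalDegree_X]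

open Classical in
theorem eval_one_symbolicMatrix (P : Matrix m n R) (f : nonzeroPositions P → V) (i : m) (j : n) :
    eval 1 (symbolicMatrix P f i j) = if (i, j) ∈ nonzeroPositions P then 1 else 0 := by
  rw [symbolicMatrix, Matrix.of_apply]
  split_ifs <;> simp

variable [Fintype ι] (P : Matrix m ι R) (Q : Matrix ι n R)

theorem totalDegree_symbolicMatrix_mul_le (f : nonzeroPositions P → V) (g : nonzeroPositions Q → V)
    (i : m) (j : n) : ((symbolicMatrix P f * symbolicMatrix Q g) i j).totalDegree ≤ 2 := by
  rw [Matrix.mul_apply]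
  exact totalDegree_finsetSum_le fun k _ => (totalDegree_mul _ _).trans <|
    add_le_add (totalDegree_symbolicMatrix_le _ _ _ _) (totalDegree_symbolicMatrix_le _ _ _ _)

theorem eval_one_symbolicMatrix_mul_le [Finite m] (f : nonzeroPositions P → V)
    (g : nonzeroPositions Q → V) (i : m) (j : n) :
    eval 1 ((symbolicMatrix P f * symbolicMatrix Q g) i j) ≤ (nonzeroPositions P).ncard := by
  classical
  have h_row : (Prod.mk i : ι → m × ι) '' {k | (i, k) ∈ nonzeroPositions P} ⊆ nonzeroPositions P :=
    Set.image_subset_iff.2 fun _ => id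
  calc eval 1 ((symbolicMatrix P f * symbolicMatrix Q g) i j)
      = ∑ k, eval 1 (symbolicMatrix P f i k) * eval 1 (symbolicMatrix Q g k j) := by
        simp only [Matrix.mul_apply, map_sum, map_mul]
    _ ≤ ∑ k, if (i, k) ∈ nonzeroPositions P then 1 else 0 := by
        gcongr with k
        simp only [eval_one_symbolicMatrix]
        split_ifs <;> simp
    _ = {k | (i, k) ∈ nonzeroPositions P}.ncard := by
        rw [← card_filter, ← Set.ncard_coe_finset, coe_filter_univ]
    _ = ((Prod.mk i : ι → m × ι) '' {k | (i, k) ∈ nonzeroPositions P}).ncard :=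
        (Set.ncard_image_of_injective _ (Prod.mk_right_injective i)).symm
    _ ≤ (nonzeroPositions P).ncard := Set.ncard_le_ncard h_row

end Symbolic

variable [CommSemiring R]

theorem map_aeval_symbolicMatrix (P : Matrix m n R) {f : nonzeroPositions P → V} {x : V → R}
    (hx : ∀ p, x (f p) = P p.1.1 p.1.2) : (symbolicMatrix P f).map (aeval x) = P := by
  ext i j
  by_cases h : (i, j) ∈ nonzeroPositions P
  · simp [symbolicMatrix, h, hx]
  · simpa [symbolicMatrix, h] using (not_not.1 h).symm

theorem card_mul_card_le_of_sumProd_injective [Fintype m] [Fintype n] [Fintype ι]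
    (P : Matrix m ι R) (Q : Matrix ι n R)
    (h : Injective (sumProd fun p : m × n => (P * Q) p.1 p.2)) :
    Fintype.card m * Fintype.card n ≤
      100 * ((nonzeroPositions P).ncard + (nonzeroPositions Q).ncard) := by
  classical
  let V := nonzeroPositions P ⊕ nonzeroPositions Q
  let B := symbolicMatrix (V := V) P Sum.inl * symbolicMatrix (V := V) Q Sum.inr
  let x : V → R := Sum.elim (fun p => P p.1.1 p.1.2) fun q => Q q.1.1 q.1.2
  have h_map : B.map (aeval x) = P * Q := by
    rw [Matrix.map_mul, map_aeval_symbolicMatrix P fun _ => rfl,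
      map_aeval_symbolicMatrix Q fun _ => rfl]
  have hB : Injective (sumProd fun p : m × n => B p.1 p.2) := by
    rw [← h_map] at h
    exact sumProd_injective_of_map (aeval x : _ →ₐ[ℕ] R).toRingHom h
  have h_card : Fintype.card V = (nonzeroPositions P).ncard + (nonzeroPositions Q).ncard := by
    simp only [V, Fintype.card_sum, Set.fintypeCard_eq_ncard]
  rw [← Fintype.card_prod, ← h_card]
  refine card_le_hundred_mul_card hB
    (fun p => totalDegree_symbolicMatrix_mul_le P Q _ _ p.1 p.2) fun p => ?_
  rw [h_card]
  exact (eval_one_symbolicMatrix_mul_le P Q _ _ p.1 p.2).trans (Nat.le_add_right _ _)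

end Factorization

theorem mul_add_succ_injective (m n : ℕ) :
    Injective fun p : Fin m × Fin n => (n + 1) * (p.1 : ℕ) + ((p.2 : ℕ) + 1) := by
  rintro ⟨i, j⟩ ⟨k, l⟩ h
  have h_div := congrArg (· / (n + 1)) h
  have h_mod := congrArg (· % (n + 1)) h
  have hj : (j : ℕ) + 1 < n + 1 := by omega
  have hl : (l : ℕ) + 1 < n + 1 := by omega
  simp only [Nat.mul_add_div n.succ_pos, Nat.mul_add_mod, Nat.div_eq_of_lt, Nat.mod_eq_of_lt,
    hj, hl] at h_div h_mod
  exact Prod.ext (Fin.ext h_div) (Fin.ext (Nat.succ_injective h_mod))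

theorem stmt17_general {m n R : Type*} [Fintype m] [Fintype n] [CommSemiring R]
    (A : Matrix m n R) (hA : Injective (sumProd fun p : m × n => A p.1 p.2)) :
    (∀ t, (subsetSums (productsOfCard (fun p : m × n => A p.1 p.2) t)).ncard =
      2 ^ (Fintype.card m * Fintype.card n).choose t) ∧
    ∀ {ι : Type*} [Fintype ι] (P : Matrix m ι R) (Q : Matrix ι n R), A = P * Q →
      (Fintype.card m * Fintype.card n : ℝ) / 100 ≤
        ((nonzeroPositions P).ncard + (nonzeroPositions Q).ncard : ℕ) := by
  refine ⟨fun t => ?_, ?_⟩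
  · rw [ncard_subsetSums_productsOfCard hA, Fintype.card_prod]
  · rintro ι _ P Q rfl
    rw [div_le_iff₀' (by norm_num)]
    exact_mod_cast card_mul_card_le_of_sumProd_injective P Q hA

theorem stmt17 (n : ℕ) (hn : 0 < n)
    (A : Matrix (Fin n) (Fin n) ℚ)
    (hA : ∀ i j : Fin n, A i j = 2 ^ 2 ^ ((n + 1) * (i : ℕ) + ((j : ℕ) + 1))) :
    2 ^ Nat.choose (n ^ 2) (n ^ 2 / 4) ≤
      Set.ncard {x : ℚ | ∃ S : Finset ℚ,
        (↑S ⊆ {y : ℚ | ∃ T : Finset (Fin n × Fin n), T.card = n ^ 2 / 4 ∧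
          y = ∏ p ∈ T, A p.1 p.2}) ∧ x = ∑ y ∈ S, y} ∧
    ∀ (r : ℕ) (P : Matrix (Fin n) (Fin r) ℚ) (Q : Matrix (Fin r) (Fin n) ℚ),
      A = P * Q →
      (n : ℝ) ^ 2 / 100 ≤
        ((Set.ncard {p : Fin n × Fin r | P p.1 p.2 ≠ 0}
          + Set.ncard {p : Fin r × Fin n | Q p.1 p.2 ≠ 0} : ℕ) : ℝ) := by
  have h_inj : Injective (sumProd fun p : Fin n × Fin n => A p.1 p.2) := by
    simpa only [hA] using sumProd_two_pow_two_pow_injective (mul_add_succ_injective n n)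
  obtain ⟨h_sums, h_sparsity⟩ := stmt17_general A h_inj
  simp only [Fintype.card_fin, ← sq] at h_sums h_sparsity
  exact ⟨(h_sums (n ^ 2 / 4)).ge, fun r P Q => h_sparsity P Q⟩
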